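/- For every positive integer n with Topological(n), there exists a positive integer n' with Binary(n'), Leaves(n') = Leaves(n), and n' ≥ n. In tree language: for every topological tree there is a binary tree with the same number of leaves and a Matula number at least as large; hence the maximiser of the Matula number among topological trees with a prescribed number of leaves is a binary tree. -/

import Mathlib

/-- `nthPrime m` is the `m`-th prime number in ascending order (1-indexed):
`nthPrime 1 = 2`, `nthPrime 2 = 3`, `nthPrime 3 = 5`, `nthPrime 4 = 7`, ... -/
noncomputable def nthPrime (m : ℕ) : ℕ := Nat.nth Nat.Prime (m - 1)

/-- `MatulaTopological n` says that `n` is the Matula number of a topological tree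
(a rooted tree with no vertex of outdegree 1): `MatulaTopological 1` holds, and for
`n > 1`, `MatulaTopological n` holds iff `n` has at least two prime factors counted
with multiplicity and `MatulaTopological m` holds for every positive `m` such that the
prime `nthPrime m` divides `n`.  (Since `nthPrime m ∣ n` forces `m < n`, this
recursion is well-founded, so the inductive predicate is its unique fixed point.) -/
inductive MatulaTopological : ℕ → Prop
  | one : MatulaTopological 1
  | node (n : ℕ) (hn : 1 < n) (hbranches : 2 ≤ n.primeFactorsList.length)
      (hrec : ∀ m : ℕ, 1 ≤ m → nthPrime m ∣ n → MatulaTopological m) :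
      MatulaTopological n

/-- `MatulaBinary n` says that `n` is the Matula number of a binary tree (every vertex
has outdegree 0 or 2): `MatulaBinary 1` holds, and for `n > 1`, `MatulaBinary n` holds
iff `n = nthPrime a * nthPrime b` for some positive `a`, `b` with `MatulaBinary a`
and `MatulaBinary b`. -/
inductive MatulaBinary : ℕ → Prop
  | one : MatulaBinary 1
  | node (a b : ℕ) (ha : 1 ≤ a) (hb : 1 ≤ b)
      (hA : MatulaBinary a) (hB : MatulaBinary b) :
      MatulaBinary (nthPrime a * nthPrime b)

lemma count_prime_add_two_le (t : ℕ) (ht : 2 ≤ t) : Nat.count Nat.Prime t + 2 ≤ t := by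
  induction t, ht using Nat.le_induction with
  | base =>
      simp [Nat.count_succ, Nat.count_zero]
      exact ⟨Nat.not_prime_zero, Nat.not_prime_one⟩
  | succ n hn ih =>
      have : Nat.count Nat.Prime (n + 1) ≤ Nat.count Nat.Prime n + 1 := by
        rw [Nat.count_succ]; split <;> omega
      omega

/-- `matulaLeaves n` is the number of leaves of the rooted tree with Matula number `n`:
`matulaLeaves 1 = 1`, and if `n > 1` has multiset of prime factors
`nthPrime m₁, …, nthPrime m_r` (counted with multiplicity), then
`matulaLeaves n = matulaLeaves m₁ + ⋯ + matulaLeaves m_r`.  Here the 1-indexed prime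
index of a prime factor `t` is recovered as `Nat.count Nat.Prime t + 1`, since
`nthPrime (Nat.count Nat.Prime t + 1) = Nat.nth Nat.Prime (Nat.count Nat.Prime t) = t`
for prime `t`. -/
def matulaLeaves (n : ℕ) : ℕ :=
  if n ≤ 1 then 1
  else (n.primeFactorsList.attach.map
    (fun t => matulaLeaves (Nat.count Nat.Prime t.1 + 1))).sum
decreasing_by
  rename_i hn
  have hmem := t.2
  have hp : (t : ℕ).Prime := Nat.prime_of_mem_primeFactorsList hmem
  have hdvd : (t : ℕ) ∣ n := Nat.dvd_of_mem_primeFactorsList hmem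
  have hle : (t : ℕ) ≤ n := Nat.le_of_dvd (by omega) hdvd
  have := count_prime_add_two_le t.1 hp.two_le
  omega

/-!
Write `p m` for `nthPrime m`. A vertex with branches of Matula numbers `m₁, …, m_r`, `r ≥ 2`, can be
unfolded into a binary comb `p m₁ * p (p m₂ * p (⋯))` with the same branches, hence with the same
leaves. Since `m ≤ p m`, each nesting can only increase the Matula number, and since `p` is
monotone, so does first replacing every branch by a binary tree that is at least as large.
-/

theorem nthPrime_prime (m : ℕ) : (nthPrime m).Prime :=
  Nat.prime_nth_prime _

theorem nthPrime_monotone : Monotone nthPrime := fun _ _ h =>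
  Nat.nth_monotone Nat.infinite_setOfPred_prime (Nat.sub_le_sub_right h 1)

theorem le_nthPrime (m : ℕ) : m ≤ nthPrime m := by
  have := Nat.add_two_le_nth_prime (m - 1)
  unfold nthPrime
  omega

theorem nthPrime_count_add_one {p : ℕ} (hp : p.Prime) :
    nthPrime (Nat.count Nat.Prime p + 1) = p :=
  Nat.nth_count hp

theorem count_nthPrime_add_one {m : ℕ} (hm : 1 ≤ m) :
    Nat.count Nat.Prime (nthPrime m) + 1 = m := by
  rw [nthPrime, Nat.count_nth_of_infinite Nat.infinite_setOfPred_prime, Nat.sub_add_cancel hm]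

/-- The Matula numbers of the branches, with multiplicity, of the rooted tree with Matula number
`n`, that is, the 1-based indices of the prime factors of `n`. -/
def matulaBranches (n : ℕ) : List ℕ :=
  n.primeFactorsList.map fun p => Nat.count Nat.Prime p + 1

theorem length_matulaBranches (n : ℕ) :
    (matulaBranches n).length = n.primeFactorsList.length :=
  List.length_map _

theorem prod_map_nthPrime_matulaBranches {n : ℕ} (hn : n ≠ 0) :
    ((matulaBranches n).map nthPrime).prod = n := by
  have h : n.primeFactorsList.map (nthPrime ∘ fun p => Nat.count Nat.Prime p + 1) =
      n.primeFactorsList.map id :=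
    List.map_congr_left fun p hp => nthPrime_count_add_one (Nat.prime_of_mem_primeFactorsList hp)
  rw [matulaBranches, List.map_map, h, List.map_id, Nat.prod_primeFactorsList hn]

theorem one_le_of_mem_matulaBranches {m n : ℕ} (hm : m ∈ matulaBranches n) : 1 ≤ m := by
  obtain ⟨p, -, rfl⟩ := List.mem_map.1 hm
  exact Nat.le_add_left 1 _

theorem nthPrime_dvd_of_mem_matulaBranches {m n : ℕ} (hm : m ∈ matulaBranches n) :
    nthPrime m ∣ n := by
  obtain ⟨p, hp, rfl⟩ := List.mem_map.1 hm
  rw [nthPrime_count_add_one (Nat.prime_of_mem_primeFactorsList hp)]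
  exact Nat.dvd_of_mem_primeFactorsList hp

theorem matulaBranches_nthPrime {m : ℕ} (hm : 1 ≤ m) : matulaBranches (nthPrime m) = [m] := by
  rw [matulaBranches, Nat.primeFactorsList_prime (nthPrime_prime m), List.map_singleton,
    count_nthPrime_add_one hm]

theorem matulaBranches_mul_perm {m n : ℕ} (hm : m ≠ 0) (hn : n ≠ 0) :
    (matulaBranches (m * n)).Perm (matulaBranches m ++ matulaBranches n) := by
  simpa only [matulaBranches, List.map_append] using (Nat.perm_primeFactorsList_mul hm hn).map _

theorem matulaLeaves_eq_sum_matulaBranches {n : ℕ} (hn : 1 < n) :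
    matulaLeaves n = ((matulaBranches n).map matulaLeaves).sum := by
  rw [matulaLeaves, if_neg hn.not_ge, matulaBranches, List.map_map]
  exact congrArg List.sum <|
    List.attach_map_val (f := fun p => matulaLeaves (Nat.count Nat.Prime p + 1))

theorem matulaLeaves_nthPrime {m : ℕ} (hm : 1 ≤ m) :
    matulaLeaves (nthPrime m) = matulaLeaves m := by
  rw [matulaLeaves_eq_sum_matulaBranches (nthPrime_prime m).one_lt, matulaBranches_nthPrime hm,
    List.map_singleton, List.sum_singleton]

theorem matulaLeaves_mul {m n : ℕ} (hm : 1 < m) (hn : 1 < n) :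
    matulaLeaves (m * n) = matulaLeaves m + matulaLeaves n := by
  have hperm := (matulaBranches_mul_perm (by omega : m ≠ 0) (by omega : n ≠ 0)).map matulaLeaves
  rw [matulaLeaves_eq_sum_matulaBranches (one_lt_mul'' hm hn), hperm.sum_eq, List.map_append,
    List.sum_append, ← matulaLeaves_eq_sum_matulaBranches hm,
    ← matulaLeaves_eq_sum_matulaBranches hn]

theorem MatulaBinary.one_le {n : ℕ} (hn : MatulaBinary n) : 1 ≤ n := by
  cases hn with
  | one => exact le_rfl
  | node a b => exact Nat.mul_pos (nthPrime_prime a).pos (nthPrime_prime b).pos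

/-- The Matula number of the binary comb carrying the trees with Matula numbers in `l`, the last two
at the same vertex: `matulaComb [a, b, c] = nthPrime a * nthPrime (nthPrime b * nthPrime c)`.
The empty comb is taken to be the single vertex. -/
noncomputable def matulaComb : List ℕ → ℕ
  | [] => 1
  | [a] => a
  | a :: b :: l => nthPrime a * nthPrime (matulaComb (b :: l))

theorem matulaBinary_matulaComb {l : List ℕ} (hl : ∀ a ∈ l, MatulaBinary a) :
    MatulaBinary (matulaComb l) := by
  fun_induction matulaComb l with
  | case1 => exact .one
  | case2 a => exact hl a List.mem_cons_self
  | case3 a b l ih =>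
    obtain ⟨ha, hbl⟩ := List.forall_mem_cons.1 hl
    exact .node _ _ ha.one_le (ih hbl).one_le ha (ih hbl)

theorem matulaLeaves_matulaComb {l : List ℕ} (hne : l ≠ []) (hl : ∀ a ∈ l, MatulaBinary a) :
    matulaLeaves (matulaComb l) = (l.map matulaLeaves).sum := by
  fun_induction matulaComb l with
  | case1 => contradiction
  | case2 a => exact List.sum_singleton.symm
  | case3 a b l ih =>
    obtain ⟨ha, hbl⟩ := List.forall_mem_cons.1 hl
    rw [matulaLeaves_mul (nthPrime_prime _).one_lt (nthPrime_prime _).one_lt,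
      matulaLeaves_nthPrime ha.one_le,
      matulaLeaves_nthPrime (matulaBinary_matulaComb hbl).one_le,
      ih (List.cons_ne_nil b l) hbl, ← List.sum_cons, ← List.map_cons]

theorem prod_map_nthPrime_le_nthPrime_matulaComb (l : List ℕ) :
    (l.map nthPrime).prod ≤ nthPrime (matulaComb l) := by
  fun_induction matulaComb l with
  | case1 => exact (nthPrime_prime 1).one_le
  | case2 a => exact List.prod_singleton.le
  | case3 a b l ih =>
    rw [List.map_cons, List.prod_cons]
    exact (Nat.mul_le_mul_left _ ih).trans (le_nthPrime _)

theorem prod_map_nthPrime_le_matulaComb {l : List ℕ} (hl : 2 ≤ l.length) :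
    (l.map nthPrime).prod ≤ matulaComb l := by
  match l, hl with
  | a :: b :: l, _ =>
    rw [List.map_cons, List.prod_cons, matulaComb]
    exact Nat.mul_le_mul_left _ (prod_map_nthPrime_le_nthPrime_matulaComb _)

theorem le_matulaComb_map_matulaBranches {n : ℕ} {f : ℕ → ℕ} (hn : 2 ≤ (matulaBranches n).length)
    (hf : ∀ m ∈ matulaBranches n, m ≤ f m) : n ≤ matulaComb ((matulaBranches n).map f) := by
  obtain rfl | hn0 := eq_or_ne n 0
  · exact Nat.zero_le _
  calc
    n = ((matulaBranches n).map nthPrime).prod := (prod_map_nthPrime_matulaBranches hn0).symm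
    _ ≤ ((matulaBranches n).map (nthPrime ∘ f)).prod :=
      List.prod_map_le_prod_map₀ _ _ (fun _ _ => Nat.zero_le _)
        fun m hm => nthPrime_monotone (hf m hm)
    _ = (((matulaBranches n).map f).map nthPrime).prod := by rw [List.map_map]
    _ ≤ matulaComb ((matulaBranches n).map f) :=
      prod_map_nthPrime_le_matulaComb (by rwa [List.length_map])

/-- For every topological tree there is a binary tree with the same number of leaves and
a Matula number at least as large; hence the maximiser of the Matula number among
topological trees with a prescribed number of leaves is a binary tree. -/
theorem exists_binary_ge_of_topological (n : ℕ) (hn : 1 ≤ n) (hT : MatulaTopological n) :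
    ∃ n' : ℕ, 1 ≤ n' ∧ MatulaBinary n' ∧ matulaLeaves n' = matulaLeaves n ∧ n ≤ n' := by
  induction hT with
  | one => exact ⟨1, le_rfl, .one, rfl, le_rfl⟩
  | node n hn1 hbranches _ ih =>
    have hlen : 2 ≤ (matulaBranches n).length := hbranches.trans_eq (length_matulaBranches n).symm
    have hbranch (m : ℕ) (hm : m ∈ matulaBranches n) :
        ∃ b, MatulaBinary b ∧ matulaLeaves b = matulaLeaves m ∧ m ≤ b := by
      have hm1 := one_le_of_mem_matulaBranches hm
      obtain ⟨b, -, hb⟩ := ih m hm1 (nthPrime_dvd_of_mem_matulaBranches hm) hm1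
      exact ⟨b, hb⟩
    choose! f hf_binary hf_leaves hf_le using hbranch
    have hbinary : ∀ b ∈ (matulaBranches n).map f, MatulaBinary b :=
      List.forall_mem_map.2 hf_binary
    have hne : (matulaBranches n).map f ≠ [] := by
      rw [← List.length_pos_iff, List.length_map]
      omega
    have hcomb := matulaBinary_matulaComb hbinary
    refine ⟨_, hcomb.one_le, hcomb, ?_, le_matulaComb_map_matulaBranches hlen hf_le⟩
    rw [matulaLeaves_matulaComb hne hbinary, matulaLeaves_eq_sum_matulaBranches hn1, List.map_map]
    exact congrArg List.sum (List.map_congr_left hf_leaves)
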